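/- There exists a T-tour of G of cost at most (8/5)·c(x*) + (1/5)·c(I_p) − (2/5)·c(L_p) − (2/5)·Σ_{C∈𝒩} (2 − x*(C))²·c(v^C). -/

import Mathlib

open Finset
open scoped Classical symmDiff

/-- A multigraph on vertex type `V` with edge type `E`, given by the two endpoints
of each edge. -/
structure MultiGraph (V E : Type*) where
  fst : E → V
  snd : E → V

namespace MultiGraph

variable {V E : Type*} [Fintype V] [DecidableEq V] [Fintype E] [DecidableEq E]
variable (G : MultiGraph V E)

/-- The cut `δ(U)`: the set of edges with exactly one endpoint in `U`. -/
noncomputable def cut (U : Finset V) : Finset E :=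
  univ.filter fun e => (G.fst e ∈ U ∧ G.snd e ∉ U) ∨ (G.fst e ∉ U ∧ G.snd e ∈ U)

/-- The degree of `v` with respect to the edge multiset `F`. -/
def deg (F : Multiset E) (v : V) : ℕ :=
  (F.map fun e => (if G.fst e = v then 1 else 0) + (if G.snd e = v then 1 else 0)).sum

/-- `odd(F)`: the set of vertices of odd degree in `(V, F)`. -/
noncomputable def oddVerts (F : Multiset E) : Finset V :=
  univ.filter fun v => Odd (G.deg F v)

/-- Adjacency via an edge satisfying the predicate `P`. -/
def Adj (P : E → Prop) (a b : V) : Prop :=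
  ∃ e, P e ∧ ((G.fst e = a ∧ G.snd e = b) ∨ (G.fst e = b ∧ G.snd e = a))

/-- `(V, {e | P e})` is a connected (spanning) subgraph. -/
def ConnectedOn (P : E → Prop) : Prop :=
  ∀ u w : V, Relation.ReflTransGen (G.Adj P) u w

/-- The graph `G` is connected. -/
def Connected : Prop := G.ConnectedOn fun _ => True

/-- A `T`-tour: a multi-subset `F` of the edges such that `(V, F)` is connected and
`odd(F) = T`. -/
def IsTTour (T : Finset V) (F : Multiset E) : Prop :=
  G.ConnectedOn (· ∈ F) ∧ G.oddVerts F = T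

/-- `S` is the edge set of a spanning tree of `G`. -/
def IsSpanningTree (S : Finset E) : Prop :=
  G.ConnectedOn (· ∈ S) ∧ S.card + 1 = Fintype.card V

/-- `δ(𝒲)`: the set of edges whose endpoints lie in different parts of the
partition `𝒲` of `V`. -/
noncomputable def partitionCut (W : Finpartition (univ : Finset V)) : Finset E :=
  univ.filter fun e => ∀ P ∈ W.parts, ¬(G.fst e ∈ P ∧ G.snd e ∈ P)

/-- Feasibility for the standard LP relaxation of the `T`-tour problem. -/
def LPFeasible (T : Finset V) (x : E → ℝ) : Prop :=
  (∀ e, 0 ≤ x e) ∧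
  (∀ U : Finset V, U.Nonempty → U ≠ univ → Even ((T ∩ U).card) →
    2 ≤ ∑ e ∈ G.cut U, x e) ∧
  (∀ W : Finpartition (univ : Finset V),
    (W.parts.card : ℝ) - 1 ≤ ∑ e ∈ G.partitionCut W, x e)

/-- `C` is a cut of `G`, i.e. `C = δ(U)` for some nonempty proper `U ⊆ V`. -/
def IsCut (C : Finset E) : Prop :=
  ∃ U : Finset V, U.Nonempty ∧ U ≠ univ ∧ C = G.cut U

/-- A narrow cut: a cut `C` with `x(C) < 2`. -/
def Narrow (x : E → ℝ) (C : Finset E) : Prop :=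
  G.IsCut C ∧ ∑ e ∈ C, x e < 2

/-- `𝒩`: the set of narrow cuts. -/
noncomputable def narrowCuts (x : E → ℝ) : Finset (Finset E) :=
  univ.filter fun C => G.Narrow x C

/-- A narrow cut `C` is lonely for `S` if `|S ∩ C| = 1`. -/
def Lonely (x : E → ℝ) (S C : Finset E) : Prop :=
  G.Narrow x C ∧ (S ∩ C).card = 1

/-- `ℒ_S`: the set of lonely cuts of `S`. -/
noncomputable def lonelyCuts (x : E → ℝ) (S : Finset E) : Finset (Finset E) :=
  univ.filter fun C => G.Lonely x S C

/-- `L_S = ∪_{C ∈ ℒ_S} (S ∩ C)`: the set of lonely edges of `S`. -/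
noncomputable def lonelyEdges (x : E → ℝ) (S : Finset E) : Finset E :=
  S.filter fun e => ∃ C, G.Lonely x S C ∧ e ∈ C

/-- The incidence vector `χ^F` of an edge set `F`. -/
def chi (F : Finset E) : E → ℝ := fun e => if e ∈ F then 1 else 0

/-- The vector `v^C = (1/(2 - x(C))) · Σ_{S : C ∈ ℒ_S} p_S · χ^{S ∩ C}`. -/
noncomputable def vC (x : E → ℝ) (p : Finset E → ℝ) (C : Finset E) : E → ℝ :=
  fun e => (1 / (2 - ∑ f ∈ C, x f)) *
    ∑ S : Finset E, (if G.Lonely x S C then p S else 0) * chi (S ∩ C) e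

/-- The modified cost
`c^S(e) = c(e) + 2·(Σ_{C ∈ ℒ_S : e ∈ C} c(S ∩ C) − max_{C ∈ ℒ_S : e ∈ C} c(S ∩ C))`,
where the maximum over the empty set is `0`. -/
noncomputable def modCost (c x : E → ℝ) (S : Finset E) (e : E) : ℝ :=
  c e + 2 * ((∑ C ∈ (G.lonelyCuts x S).filter (fun C => e ∈ C), ∑ f ∈ S ∩ C, c f)
    - (if h : ((G.lonelyCuts x S).filter (fun C => e ∈ C)).Nonempty
        then ((G.lonelyCuts x S).filter (fun C => e ∈ C)).sup' h (fun C => ∑ f ∈ S ∩ C, c f)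
        else 0))

/-- The set of vertices reachable from `v` using edges satisfying `P`. -/
noncomputable def reachSet (P : E → Prop) (v : V) : Finset V :=
  univ.filter fun w => Relation.ReflTransGen (G.Adj P) v w

end MultiGraph

namespace MultiGraph

variable {V E : Type*} [Fintype V] [DecidableEq V] [Fintype E] [DecidableEq E]

/-!
Remove from a tree `S` its lonely edges and add a least-cost join `J` restoring the parities. The
result may be disconnected only because an edge of `J` crosses several lonely cuts and can replace
just one of their lonely edges; buying each of the others twice repairs this, and the modified cost
charges `J` for it, sparing the most expensive lonely edge. By the Edmonds–Johnson theorem `J`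
costs no more than any vector `y ≥ 0` with `y(δ(U)) ≥ 1` whenever parities must change across `U`;
such a `y` is `2/5 x + 1/5 χ^{S \ L_S} + 1/5 χ^{I_S \ L_S} + Σ_{C ∈ ℒ_S} (1 - 2/5 x(C)) χ^{S ∩ C}`.
The surcharge in the modified cost of `x` is at most `2 Σ_{C ∈ ℒ_S} (x(C) - 1) c(S ∩ C)`, since the
partition constraints give every family `𝒦` of lonely cuts `x(⋃ 𝒦) ≥ |𝒦|`. This bounds the cost of
the tour built from `S`, and some `S` does at least as well as the `p`-average of these bounds.
-/

section Parity

lemma odd_card_inter_singleton {α : Type*} [DecidableEq α] (A : Finset α) (a : α) :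
    Odd #(A ∩ {a}) ↔ a ∈ A := by
  by_cases h : a ∈ A <;> simp [h]

lemma odd_card_symmDiff_inter {α : Type*} [DecidableEq α] (A B C : Finset α) :
    Odd #((A ∆ B) ∩ C) ↔ (Odd #(A ∩ C) ↔ Even #(B ∩ C)) := by
  have hunion : (A ∆ B) ∩ C = A ∩ (C \ B) ∪ B ∩ (C \ A) := by
    ext; simp only [mem_inter, mem_symmDiff, mem_union, mem_sdiff]; tauto
  have hA : A ∩ C = A ∩ (C \ B) ∪ A ∩ B ∩ C := by
    ext; simp only [mem_inter, mem_union, mem_sdiff]; tauto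
  have hB : B ∩ C = B ∩ (C \ A) ∪ A ∩ B ∩ C := by
    ext; simp only [mem_inter, mem_union, mem_sdiff]; tauto
  rw [hunion, hA, hB, card_union_of_disjoint, card_union_of_disjoint, card_union_of_disjoint]
  · grind
  all_goals simp only [disjoint_left, mem_inter, mem_sdiff]; tauto

lemma odd_card_singleton_symmDiff_inter {α : Type*} [DecidableEq α] (a b : α) (C : Finset α) :
    Odd #(({a} ∆ {b}) ∩ C) ↔ ¬(a ∈ C ↔ b ∈ C) := by
  rw [odd_card_symmDiff_inter, ← Nat.not_odd_iff_even, inter_comm, odd_card_inter_singleton,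
    inter_comm, odd_card_inter_singleton]
  tauto

variable (G : MultiGraph V E)

section Cut

omit [Fintype V]

omit [DecidableEq E] in
@[simp]
lemma mem_cut (U : Finset V) (e : E) : e ∈ G.cut U ↔ ¬(G.fst e ∈ U ↔ G.snd e ∈ U) := by
  simp only [cut, mem_filter, mem_univ, true_and]
  tauto

lemma cut_symmDiff (U W : Finset V) : G.cut (U ∆ W) = G.cut U ∆ G.cut W := by
  ext e
  simp only [mem_cut, mem_symmDiff]
  tauto

end Cut

omit [Fintype V] [Fintype E] [DecidableEq E] in
lemma odd_sum_deg_iff (F : Multiset E) (U : Finset V) :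
    Odd (∑ v ∈ U, G.deg F v) ↔ Odd (F.countP fun e => ¬(G.fst e ∈ U ↔ G.snd e ∈ U)) := by
  induction F using Multiset.induction with
  | empty => simp [deg]
  | cons e F ih =>
    have hdeg (v : V) : G.deg (e ::ₘ F) v =
        ((if G.fst e = v then 1 else 0) + if G.snd e = v then 1 else 0) + G.deg F v := by
      simp [deg]
    simp only [hdeg, sum_add_distrib, sum_ite_eq, Multiset.countP_cons] at ih ⊢
    by_cases hfst : G.fst e ∈ U <;> by_cases hsnd : G.snd e ∈ U <;>
      simp only [hfst, hsnd, if_true, if_false] <;> grind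

omit [Fintype E] [DecidableEq E] in
lemma odd_card_oddVerts_inter_iff_odd_countP (F : Multiset E) (U : Finset V) :
    Odd #(G.oddVerts F ∩ U) ↔ Odd (F.countP fun e => ¬(G.fst e ∈ U ↔ G.snd e ∈ U)) := by
  rw [← odd_sum_deg_iff, odd_sum_iff_odd_card_odd, oddVerts, filter_inter, univ_inter]

section OddVerts

omit [Fintype E]

omit [DecidableEq E] in
@[simp]
lemma oddVerts_zero : G.oddVerts (0 : Multiset E) = ∅ := by
  simp [oddVerts, deg]

omit [DecidableEq E] in
lemma oddVerts_singleton (e : E) :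
    G.oddVerts ({e} : Finset E).val = {G.fst e} ∆ {G.snd e} := by
  ext v
  simp only [oddVerts, deg, singleton_val, Multiset.map_singleton, Multiset.sum_singleton,
    mem_filter, mem_univ, true_and, mem_symmDiff, mem_singleton, eq_comm (a := v)]
  by_cases hfst : G.fst e = v <;> by_cases hsnd : G.snd e = v <;> simp [hfst, hsnd]

omit [DecidableEq E] in
lemma oddVerts_add (F F' : Multiset E) :
    G.oddVerts (F + F') = G.oddVerts F ∆ G.oddVerts F' := by
  ext v
  have hdeg : G.deg (F + F') v = G.deg F v + G.deg F' v := by simp [deg]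
  simp only [oddVerts, hdeg, Nat.odd_add, mem_filter, mem_univ, true_and, mem_symmDiff]
  grind

lemma oddVerts_symmDiff (F F' : Finset E) :
    G.oddVerts (F ∆ F').val = G.oddVerts F.val ∆ G.oddVerts F'.val := by
  have hval : F.val + F'.val = (F ∆ F').val + ((F ∩ F').val + (F ∩ F').val) := by
    ext e
    simp only [Multiset.count_add, Multiset.count_eq_of_nodup (nodup _), mem_val, mem_symmDiff,
      mem_inter]
    by_cases hF : e ∈ F <;> by_cases hF' : e ∈ F' <;> simp [hF, hF']
  rw [← oddVerts_add, hval, oddVerts_add, oddVerts_add _ (F ∩ F').val, symmDiff_self]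
  exact (symmDiff_bot _).symm

end OddVerts

omit [DecidableEq E] in
@[simp]
lemma cut_univ : G.cut univ = ∅ := by
  ext e
  simp

lemma odd_card_oddVerts_inter (F : Finset E) (U : Finset V) :
    Odd #(G.oddVerts F.val ∩ U) ↔ Odd #(F ∩ G.cut U) := by
  rw [odd_card_oddVerts_inter_iff_odd_countP, Multiset.countP_eq_card_filter,
    ← filter_mem_eq_inter]
  simp only [mem_cut]
  rfl

lemma odd_card_inter_cut_of_oddVerts {P : Finset E} {u v : V}
    (hP : G.oddVerts P.val = {u} ∆ {v}) (W : Finset V) :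
    Odd #(P ∩ G.cut W) ↔ ¬(u ∈ W ↔ v ∈ W) := by
  rw [← odd_card_oddVerts_inter, hP, odd_card_singleton_symmDiff_inter]

omit [DecidableEq E] in
lemma mem_cut_iff_of_oddVerts_singleton {e : E} {u v : V}
    (he : G.oddVerts ({e} : Finset E).val = {u} ∆ {v}) (W : Finset V) :
    e ∈ G.cut W ↔ ¬(u ∈ W ↔ v ∈ W) := by
  rw [← G.odd_card_inter_cut_of_oddVerts he, inter_comm, odd_card_inter_singleton]

end Parity

section Reachability

variable (G : MultiGraph V E)

omit [DecidableEq V] [Fintype E] [DecidableEq E] in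
@[simp]
lemma mem_reachSet {P : E → Prop} {u v : V} :
    v ∈ G.reachSet P u ↔ Relation.ReflTransGen (G.Adj P) u v := by
  simp [reachSet]

omit [DecidableEq V] [Fintype E] [DecidableEq E] in
lemma fst_mem_reachSet_iff_snd_mem_reachSet {P : E → Prop} {u : V} {e : E} (he : P e) :
    G.fst e ∈ G.reachSet P u ↔ G.snd e ∈ G.reachSet P u := by
  simp only [mem_reachSet]
  exact ⟨fun h => h.tail ⟨e, he, .inl ⟨rfl, rfl⟩⟩, fun h => h.tail ⟨e, he, .inr ⟨rfl, rfl⟩⟩⟩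

omit [DecidableEq E] in
lemma not_of_mem_cut_reachSet {P : E → Prop} {u : V} {e : E}
    (he : e ∈ G.cut (G.reachSet P u)) : ¬P e :=
  fun hP => (G.mem_cut _ e).1 he (G.fst_mem_reachSet_iff_snd_mem_reachSet hP)

variable {G} in
omit [Fintype V] [DecidableEq E] in
lemma ConnectedOn.exists_mem_cut {P : E → Prop} (hP : G.ConnectedOn P) {U : Finset V} {a b : V}
    (ha : a ∈ U) (hb : b ∉ U) : ∃ e ∈ G.cut U, P e := by
  by_contra! hcut
  suffices b ∈ U from hb this
  clear hb
  induction hP a b with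
  | refl => exact ha
  | tail _ hadj ih =>
    obtain ⟨e, he, ⟨rfl, rfl⟩ | ⟨rfl, rfl⟩⟩ := hadj <;> by_contra hb <;>
      exact hcut e (by simp [ih, hb]) he

omit [DecidableEq E] in
lemma connectedOn_of_forall_cut {P : E → Prop}
    (h : ∀ U : Finset V, U.Nonempty → U ≠ univ → ∃ e ∈ G.cut U, P e) : G.ConnectedOn P := by
  intro u v
  by_contra huv
  obtain ⟨e, he, hP⟩ := h (G.reachSet P u) ⟨u, by simpa using .refl⟩
    fun hu => huv (G.mem_reachSet.1 (hu ▸ mem_univ v))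
  exact G.not_of_mem_cut_reachSet he hP

omit [Fintype E] [DecidableEq E] in
lemma exists_oddVerts_singleton_of_adj {P : E → Prop} {u v : V} (huv : G.Adj P u v) :
    ∃ e, P e ∧ G.oddVerts ({e} : Finset E).val = {u} ∆ {v} := by
  obtain ⟨e, he, hends⟩ := huv
  refine ⟨e, he, (G.oddVerts_singleton e).trans ?_⟩
  rcases hends with ⟨rfl, rfl⟩ | ⟨rfl, rfl⟩
  exacts [rfl, symmDiff_comm _ _]

omit [Fintype E] [DecidableEq E] in
lemma exists_oddVerts_of_reflTransGen {P : E → Prop} {u v : V}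
    (huv : Relation.ReflTransGen (G.Adj P) u v) :
    ∃ F : Finset E, (∀ e ∈ F, P e) ∧ G.oddVerts F.val = {u} ∆ {v} := by
  induction huv with
  | refl => exact ⟨∅, by simp, by simp⟩
  | tail _ hadj ih =>
    obtain ⟨F, hF, hodd⟩ := ih
    obtain ⟨e, he, heodd⟩ := G.exists_oddVerts_singleton_of_adj hadj
    refine ⟨F ∆ {e}, by grind [mem_symmDiff], ?_⟩
    rw [oddVerts_symmDiff, hodd, heodd, symmDiff_assoc, symmDiff_symmDiff_cancel_left]

omit [Fintype E] [DecidableEq E] in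
lemma reflTransGen_of_oddVerts {F : Multiset E} {u v : V} (hF : G.oddVerts F = {u} ∆ {v}) :
    Relation.ReflTransGen (G.Adj (· ∈ F)) u v := by
  by_contra huv
  have hodd : Odd #(G.oddVerts F ∩ G.reachSet (· ∈ F) u) := by
    rw [hF, odd_card_singleton_symmDiff_inter]
    simpa [Relation.ReflTransGen.refl] using huv
  rw [odd_card_oddVerts_inter_iff_odd_countP, Multiset.countP_eq_zero.2] at hodd
  · simp at hodd
  · exact fun e he => not_not.2 (G.fst_mem_reachSet_iff_snd_mem_reachSet he)

end Reachability

section TJoin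

section SymmDiffSum

variable {α M : Type*} [DecidableEq α] [AddCommMonoid M] {w : α → M}

lemma sum_symmDiff_of_forall_eq_zero {K Q : Finset α} (hQ : ∀ e ∈ Q, w e = 0) :
    ∑ e ∈ K ∆ Q, w e = ∑ e ∈ K, w e := by
  rw [← sum_subset (s₁ := K \ Q) (s₂ := K), ← sum_subset (s₁ := K \ Q) (s₂ := K ∆ Q)]
  all_goals grind [mem_symmDiff]

lemma sum_symmDiff_add_sum_symmDiff {J K Q : Finset α} (hQ : ∀ e ∈ Q, e ∈ J ∆ K ∨ w e = 0) :
    ∑ e ∈ J ∆ Q, w e + ∑ e ∈ K ∆ Q, w e = ∑ e ∈ J, w e + ∑ e ∈ K, w e := by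
  have hsum (F : Finset α) (hF : F ⊆ J ∪ K ∪ Q) :
      ∑ e ∈ F, w e = ∑ e ∈ J ∪ K ∪ Q, if e ∈ F then w e else 0 := by
    rw [sum_ite_mem, inter_eq_right.2 hF]
  rw [hsum (J ∆ Q) (by grind [mem_symmDiff]), hsum (K ∆ Q) (by grind [mem_symmDiff]),
    hsum J (by grind), hsum K (by grind), ← sum_add_distrib, ← sum_add_distrib]
  refine sum_congr rfl fun e _ => ?_
  have := hQ e
  by_cases hJ : e ∈ J <;> by_cases hK : e ∈ K <;> by_cases he : e ∈ Q <;>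
    simp_all [mem_symmDiff]

lemma sum_symmDiff_singleton {M : Type*} [AddCommGroup M] {w : α → M} {K : Finset α} {e : α}
    (he : e ∈ K) : ∑ f ∈ K ∆ {e}, w f = ∑ f ∈ K, w f - w e := by
  rw [symmDiff_of_ge (singleton_subset_iff.2 he), sdiff_singleton_eq_erase, sum_erase_eq_sub he]

end SymmDiffSum

variable (G : MultiGraph V E)

omit [DecidableEq E] in
lemma exists_oddVerts_singleton_of_mem_cut {U : Finset V} {e : E} (he : e ∈ G.cut U) :
    ∃ a ∈ U, ∃ b ∉ U, G.oddVerts ({e} : Finset E).val = {a} ∆ {b} := by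
  rw [oddVerts_singleton]
  rw [mem_cut] at he
  by_cases h : G.fst e ∈ U
  · exact ⟨_, h, G.snd e, by tauto, rfl⟩
  · exact ⟨G.snd e, by tauto, _, h, symmDiff_comm _ _⟩

lemma exists_oddVerts_card_inter_cut_reachSet_le_one {P : E → Prop} (Z : E → Prop) {a b : V}
    (hab : Relation.ReflTransGen (G.Adj P) a b) :
    ∃ R : Finset E, (∀ e ∈ R, P e ∨ Z e) ∧ G.oddVerts R.val = {a} ∆ {b} ∧
      #(R ∩ G.cut (G.reachSet Z a)) ≤ 1 := by
  have hZ {b : V} (hb : b ∈ G.reachSet Z a) : ∃ R : Finset E, (∀ e ∈ R, Z e) ∧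
      G.oddVerts R.val = {a} ∆ {b} ∧ Disjoint R (G.cut (G.reachSet Z a)) := by
    obtain ⟨R, hR, hodd⟩ := G.exists_oddVerts_of_reflTransGen (G.mem_reachSet.1 hb)
    exact ⟨R, hR, hodd, disjoint_left.2 fun e he hcut => G.not_of_mem_cut_reachSet hcut (hR e he)⟩
  induction hab with
  | refl => exact ⟨∅, by simp, by simp, by simp⟩
  | @tail b c _ hadj ih =>
    obtain ⟨e, he, heodd⟩ := G.exists_oddVerts_singleton_of_adj hadj
    have hodd {R : Finset E} (hR : G.oddVerts R.val = {a} ∆ {b}) :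
        G.oddVerts (R ∆ {e}).val = {a} ∆ {c} := by
      rw [oddVerts_symmDiff, hR, heodd, symmDiff_assoc, symmDiff_symmDiff_cancel_left]
    by_cases hc : c ∈ G.reachSet Z a
    · obtain ⟨R, hR, hodd, hcut⟩ := hZ hc
      exact ⟨R, fun f hf => .inr (hR f hf), hodd, by simp [disjoint_iff_inter_eq_empty.1 hcut]⟩
    by_cases hb : b ∈ G.reachSet Z a
    · obtain ⟨R, hR, hRodd, hcut⟩ := hZ hb
      refine ⟨R ∆ {e}, by grind [mem_symmDiff], hodd hRodd,
        (card_le_card fun f => ?_).trans_eq (card_singleton e)⟩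
      have := @disjoint_left.1 hcut f
      simp only [mem_inter, mem_symmDiff, mem_singleton]
      tauto
    · obtain ⟨R, hR, hRodd, hcut⟩ := ih
      have he : e ∉ G.cut (G.reachSet Z a) := by
        rw [G.mem_cut_iff_of_oddVerts_singleton heodd]
        tauto
      refine ⟨R ∆ {e}, by grind [mem_symmDiff], hodd hRodd, (card_le_card fun f => ?_).trans hcut⟩
      simp only [mem_inter, mem_symmDiff, mem_singleton]
      rintro ⟨⟨hf, -⟩ | ⟨rfl, -⟩, hfcut⟩
      exacts [⟨hf, hfcut⟩, absurd hfcut he]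

/-- `J` has least `w`-weight among the `T`-joins, the edge sets with odd vertex set `T`. -/
def IsMinTJoin (w : E → ℝ) (T : Finset V) (J : Finset E) : Prop :=
  G.oddVerts J.val = T ∧ ∀ J' : Finset E, G.oddVerts J'.val = T → ∑ e ∈ J, w e ≤ ∑ e ∈ J', w e

/-- `K` has least `w`-weight among all joins whose odd vertex set differs from `T` by a pair of
(possibly equal) vertices; `a`, `b` is the pair for `K`. -/
def IsMinNearTJoin (w : E → ℝ) (T : Finset V) (a b : V) (K : Finset E) : Prop :=
  G.oddVerts K.val = T ∆ ({a} ∆ {b}) ∧ ∀ (a' b' : V) (K' : Finset E),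
    G.oddVerts K'.val = T ∆ ({a'} ∆ {b'}) → ∑ e ∈ K, w e ≤ ∑ e ∈ K', w e

variable {G} {w : E → ℝ} {T : Finset V} {J K : Finset E} {a b : V}

omit [DecidableEq E] in
/-- Otherwise trading an edge of the cut for a weightless path gives a lighter near-join. -/
lemma IsMinNearTJoin.disjoint_cut_reachSet (hw : ∀ e, 0 ≤ w e)
    (hK : G.IsMinNearTJoin w T a b K) : Disjoint K (G.cut (G.reachSet (w · = 0) a)) := by
  refine disjoint_left.2 fun e heK he => ?_
  have hpos : 0 < w e := (hw e).lt_of_ne' (G.not_of_mem_cut_reachSet he)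
  obtain ⟨a', ha', v, -, hodd⟩ := G.exists_oddVerts_singleton_of_mem_cut he
  obtain ⟨F, hF, hFodd⟩ := G.exists_oddVerts_of_reflTransGen (G.mem_reachSet.1 ha')
  have hodd' : G.oddVerts (K ∆ {e} ∆ F).val = T ∆ ({b} ∆ {v}) := by
    rw [oddVerts_symmDiff, oddVerts_symmDiff, hK.1, hodd, hFodd, symmDiff_right_comm,
      symmDiff_comm ({a} : Finset V) {b}]
    simp only [symmDiff_assoc, symmDiff_symmDiff_cancel_left]
  have hle := hK.2 b v _ hodd'
  rw [sum_symmDiff_of_forall_eq_zero hF, sum_symmDiff_singleton heK] at hle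
  linarith

omit [Fintype E] [DecidableEq E] in
lemma IsMinTJoin.exists_isMinNearTJoin [Finite E] (hJ : G.IsMinTJoin w T J)
    (hpos : 0 < ∑ e ∈ J, w e) :
    ∃ a b K, G.IsMinNearTJoin w T a b K ∧ ∑ e ∈ K, w e < ∑ e ∈ J, w e := by
  obtain ⟨e, he, hwe⟩ : ∃ e ∈ J, 0 < w e := by
    by_contra! h
    exact hpos.not_ge (sum_nonpos h)
  have hodd : G.oddVerts (J ∆ {e}).val = T ∆ ({G.fst e} ∆ {G.snd e}) := by
    rw [oddVerts_symmDiff, hJ.1, oddVerts_singleton]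
  let NearTJoin := {q : V × V × Finset E // G.oddVerts q.2.2.val = T ∆ ({q.1} ∆ {q.2.1})}
  have : Nonempty NearTJoin := ⟨⟨(_, _, _), hodd⟩⟩
  obtain ⟨⟨⟨a, b, K⟩, hK⟩, hmin⟩ := Finite.exists_min fun q : NearTJoin => ∑ e ∈ q.1.2.2, w e
  have hK' : G.IsMinNearTJoin w T a b K := ⟨hK, fun a' b' K' h => hmin ⟨(a', b', K'), h⟩⟩
  refine ⟨a, b, K, hK', (hK'.2 _ _ _ hodd).trans_lt ?_⟩
  rw [sum_symmDiff_singleton he]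
  linarith

/-- A minimum join crossing the cut twice could be rerouted, together with `K`, along a cycle of
`J ∆ K` and weightless edges; the rerouted `K` would still be minimum but would cross the cut. -/
lemma IsMinNearTJoin.card_inter_cut_reachSet_le_one (hw : ∀ e, 0 ≤ w e)
    (hK : G.IsMinNearTJoin w T a b K) (hJ : G.IsMinTJoin w T J) :
    #(J ∩ G.cut (G.reachSet (w · = 0) a)) ≤ 1 := by
  set C := G.cut (G.reachSet (w · = 0) a)
  have hKC : Disjoint K C := hK.disjoint_cut_reachSet hw
  have hJK : G.oddVerts (J ∆ K).val = {a} ∆ {b} := by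
    rw [oddVerts_symmDiff, hJ.1, hK.1, symmDiff_symmDiff_cancel_left]
  obtain ⟨R, hR, hRodd, hRC⟩ := G.exists_oddVerts_card_inter_cut_reachSet_le_one (w · = 0)
    (G.reflTransGen_of_oddVerts hJK)
  by_contra! hJC
  obtain ⟨e, he, heR⟩ := exists_mem_notMem_of_card_lt_card (hRC.trans_lt hJC)
  have heC : e ∈ C := (mem_inter.1 he).2
  have heK : e ∉ K := disjoint_right.1 hKC heC
  let Q := (J ∆ K) ∆ R
  have hQodd : G.oddVerts Q.val = ∅ := by
    rw [oddVerts_symmDiff, hJK, hRodd, symmDiff_self, bot_eq_empty]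
  have hodd (F : Finset E) : G.oddVerts (F ∆ Q).val = G.oddVerts F.val := by
    rw [oddVerts_symmDiff, hQodd, ← bot_eq_empty, symmDiff_bot]
  have heQ : e ∈ Q := by grind [mem_symmDiff]
  have hQ : ∀ e ∈ Q, e ∈ J ∆ K ∨ w e = 0 := by grind [mem_symmDiff]
  have hsum := sum_symmDiff_add_sum_symmDiff hQ
  have hJQ := hJ.2 (J ∆ Q) ((hodd J).trans hJ.1)
  have hKQ : G.IsMinNearTJoin w T a b (K ∆ Q) :=
    ⟨(hodd K).trans hK.1, fun a' b' K' h => by linarith [hK.2 a' b' K' h]⟩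
  exact disjoint_left.1 (hKQ.disjoint_cut_reachSet hw) (mem_symmDiff.2 (.inr ⟨heQ, heK⟩)) heC

lemma IsMinTJoin.exists_cut (hw : ∀ e, 0 ≤ w e) (hJ : G.IsMinTJoin w T J)
    (hpos : 0 < ∑ e ∈ J, w e) :
    ∃ U : Finset V, Odd #(T ∩ U) ∧ (∀ e ∈ G.cut U, 0 < w e) ∧
      ∀ J', G.IsMinTJoin w T J' → #(J' ∩ G.cut U) = 1 := by
  obtain ⟨a, b, K, hK, hlt⟩ := hJ.exists_isMinNearTJoin hpos
  set A := G.reachSet (w · = 0) a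
  have hKA : K ∩ G.cut A = ∅ := disjoint_iff_inter_eq_empty.1 (hK.disjoint_cut_reachSet hw)
  have ha : a ∈ A := G.mem_reachSet.2 .refl
  have hb : b ∉ A := by
    intro hb
    obtain ⟨F, hF, hFodd⟩ := G.exists_oddVerts_of_reflTransGen (G.mem_reachSet.1 hb)
    have hle := hJ.2 (K ∆ F) (by
      rw [oddVerts_symmDiff, hK.1, hFodd, symmDiff_symmDiff_cancel_right])
    rw [sum_symmDiff_of_forall_eq_zero hF] at hle
    exact hlt.not_ge hle
  have hT : Odd #(T ∩ A) := by
    have hKodd := (G.odd_card_oddVerts_inter K A).not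
    rw [hKA, hK.1, odd_card_symmDiff_inter, ← Nat.not_odd_iff_even,
      odd_card_singleton_symmDiff_inter] at hKodd
    simpa [ha, hb] using hKodd
  refine ⟨A, hT, fun e he => (hw e).lt_of_ne' (G.not_of_mem_cut_reachSet he), fun J' hJ' => ?_⟩
  have hodd : Odd #(J' ∩ G.cut A) := by rwa [← odd_card_oddVerts_inter, hJ'.1]
  exact le_antisymm (hK.card_inter_cut_reachSet_le_one hw hJ') hodd.pos

section Chi

variable {α : Type*} [DecidableEq α]

lemma sum_chi (A B : Finset α) : ∑ e ∈ A, chi B e = #(A ∩ B) := by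
  simp [chi]

lemma sum_mul_chi [Fintype α] (f : α → ℝ) (A : Finset α) : ∑ e, f e * chi A e = ∑ e ∈ A, f e := by
  simp [chi]

end Chi

lemma exists_pos_card_support_sub_lt {ι : Type*} [Fintype ι] {α β : ι → ℝ} (hα : ∀ i, 0 ≤ α i)
    (hβ : ∀ i, 0 ≤ β i) (hαβ : ∀ i, α i = 0 → β i = 0) (hne : ∃ i, β i ≠ 0) :
    ∃ ε > 0, (∀ i, 0 ≤ α i - ε * β i) ∧ #{i | α i - ε * β i ≠ 0} < #{i | α i ≠ 0} := by
  obtain ⟨i, hi, hmin⟩ := exists_min_image {i | β i ≠ 0} (fun i => α i / β i) (by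
    simpa [filter_nonempty_iff] using hne)
  have hβi : 0 < β i := (hβ i).lt_of_ne' (by simpa using hi)
  have hαi : 0 < α i := (hα i).lt_of_ne' (mt (hαβ i) hβi.ne')
  refine ⟨α i / β i, div_pos hαi hβi, fun j => ?_, card_lt_card (ssubset_iff_of_subset ?_ |>.2 ?_)⟩
  · by_cases hj : β j = 0
    · simpa [hj] using hα j
    · exact sub_nonneg.2 ((le_div_iff₀ ((hβ j).lt_of_ne' hj)).1 (hmin j (by simpa using hj)))
  · intro j hj
    simp only [mem_filter, mem_univ, true_and] at hj ⊢
    exact fun h => hj (by simp [h, hαβ j h])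
  · exact ⟨i, by simpa using hαi.ne', by simp [div_mul_cancel₀ _ hβi.ne']⟩

variable (G) in
/-- The slacks of `w ≥ 0` and of `w(J) ≤ w(J')` for all `T`-joins `J'`: they are all nonnegative
exactly when `w` is nonnegative and `J` has least weight, and they are linear in `w`. -/
def slack (T : Finset V) (J : Finset E) (w : E → ℝ) :
    E ⊕ {J' : Finset E // G.oddVerts J'.val = T} → ℝ :=
  Sum.elim w fun J' => ∑ e ∈ J'.1, w e - ∑ e ∈ J, w e

omit [Fintype E] [DecidableEq E] in
lemma slack_sub_mul (w v : E → ℝ) (ε : ℝ) (i) :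
    G.slack T J (fun e => w e - ε * v e) i = G.slack T J w i - ε * G.slack T J v i := by
  rcases i with e | J'
  · rfl
  · simp only [slack, Sum.elim_inr, sum_sub_distrib, ← mul_sum]
    ring

omit [Fintype E] [DecidableEq E] in
lemma isMinTJoin_iff_slack_nonneg (hJ : G.oddVerts J.val = T) :
    ((∀ e, 0 ≤ w e) ∧ G.IsMinTJoin w T J) ↔ ∀ i, 0 ≤ G.slack T J w i := by
  simp [slack, IsMinTJoin, hJ]

lemma IsMinTJoin.exists_slack_chi (hw : ∀ e, 0 ≤ w e) (hJ : G.IsMinTJoin w T J)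
    (hpos : 0 < ∑ e ∈ J, w e) :
    ∃ U : Finset V, Odd #(T ∩ U) ∧ #(J ∩ G.cut U) = 1 ∧
      (∀ i, 0 ≤ G.slack T J (chi (G.cut U)) i) ∧
      ∀ i, G.slack T J w i = 0 → G.slack T J (chi (G.cut U)) i = 0 := by
  obtain ⟨U, hU, hcut, hcard⟩ := hJ.exists_cut hw hpos
  have hJU := hcard J hJ
  refine ⟨U, hU, hJU, ?_, ?_⟩
  · rintro (e | ⟨J', hJ'⟩)
    · simp only [slack, Sum.elim_inl, chi]
      positivity
    · have hodd : Odd #(J' ∩ G.cut U) := by rwa [← odd_card_oddVerts_inter, hJ']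
      simpa [slack, sum_chi, hJU] using hodd.pos
  · rintro (e | ⟨J', hJ'⟩) h
    · exact if_neg fun he => (hcut e he).ne' h
    · have hmin : G.IsMinTJoin w T J' := ⟨hJ', (sub_eq_zero.1 h).symm ▸ hJ.2⟩
      simp [slack, sum_chi, hJU, hcard J' hmin]

omit [DecidableEq E] in
/-- Each step moves weight `ε` onto a `T`-odd cut that all minimum joins cross once, until a new
slack vanishes; the shifts form a fractional packing of `T`-odd cuts of total value `w(J)`. -/
theorem IsMinTJoin.sum_le_sum_mul {y : E → ℝ} (hw : ∀ e, 0 ≤ w e) (hJ : G.IsMinTJoin w T J)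
    (hy : ∀ e, 0 ≤ y e) (hcut : ∀ U : Finset V, Odd #(T ∩ U) → 1 ≤ ∑ e ∈ G.cut U, y e) :
    ∑ e ∈ J, w e ≤ ∑ e, y e * w e := by
  induction hn : #{i | G.slack T J w i ≠ 0} using Nat.strong_induction_on generalizing w with
  | _ n ih =>
  rcases (sum_nonneg fun e _ => hw e).eq_or_lt' with hzero | hpos
  · exact hzero.trans_le (sum_nonneg fun e _ => mul_nonneg (hy e) (hw e))
  obtain ⟨U, hU, hJU, hnonneg, hzero⟩ := hJ.exists_slack_chi hw hpos
  obtain ⟨e, he⟩ := card_pos.1 (hJU ▸ one_pos)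
  obtain ⟨ε, hε, hε_nonneg, hlt⟩ := exists_pos_card_support_sub_lt
    ((isMinTJoin_iff_slack_nonneg hJ.1).1 ⟨hw, hJ⟩) hnonneg hzero
    ⟨.inl e, by simp [slack, chi, (mem_inter.1 he).2]⟩
  simp only [← slack_sub_mul] at hε_nonneg hlt
  obtain ⟨hw', hJ'⟩ := (isMinTJoin_iff_slack_nonneg hJ.1).2 hε_nonneg
  have hle := ih _ (hn ▸ hlt) hw' hJ' rfl
  simp only [sum_sub_distrib, mul_sub, ← mul_sum, mul_left_comm _ ε, sum_chi, sum_mul_chi, hJU,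
    Nat.cast_one] at hle
  nlinarith [hcut U hU]

omit [DecidableEq E] in
theorem exists_tJoin_sum_le_sum_mul {y : E → ℝ} (hw : ∀ e, 0 ≤ w e) (hJ : G.oddVerts J.val = T)
    (hy : ∀ e, 0 ≤ y e) (hcut : ∀ U : Finset V, Odd #(T ∩ U) → 1 ≤ ∑ e ∈ G.cut U, y e) :
    ∃ J' : Finset E, G.oddVerts J'.val = T ∧ ∑ e ∈ J', w e ≤ ∑ e, y e * w e := by
  obtain ⟨J', hJ', hmin⟩ := exists_min_image {J : Finset E | G.oddVerts J.val = T}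
    (fun J => ∑ e ∈ J, w e) ⟨J, by simpa using hJ⟩
  have hmin : G.IsMinTJoin w T J' := ⟨by simpa using hJ', fun K hK => hmin K (by simpa using hK)⟩
  exact ⟨J', hmin.1, hmin.sum_le_sum_mul hw hy hcut⟩

end TJoin

section FundamentalCut

variable {G : MultiGraph V E} {T : Finset V} {x : E → ℝ} {S C C' : Finset E}

lemma LPFeasible.card_sub_one_le_sum_biUnion_cut (hx : G.LPFeasible T x) {ι : Type*}
    {s : Finset ι} {U : ι → Finset V} {A : Finset V}
    (hA : ∀ a ∈ A, ∀ b ∈ A, (∀ i ∈ s, a ∈ U i ↔ b ∈ U i) → a = b) :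
    (#A : ℝ) - 1 ≤ ∑ e ∈ s.biUnion fun i => G.cut (U i), x e := by
  let sameSide : Setoid V :=
    { r := fun a b => ∀ i ∈ s, a ∈ U i ↔ b ∈ U i
      iseqv := ⟨fun _ _ _ => .rfl, fun h i hi => (h i hi).symm,
        fun h h' i hi => (h i hi).trans (h' i hi)⟩ }
  let W := Finpartition.ofSetoid sameSide
  have hpart : #A ≤ #W.parts := by
    refine card_le_card_of_injOn W.part (fun a _ => W.part_mem.2 (mem_univ a))
      fun a ha b hb hab => hA a ha b hb ?_
    have hmem : b ∈ W.part a := hab ▸ W.mem_part (mem_univ b)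
    exact Finpartition.mem_part_ofSetoid_iff_rel.1 hmem
  have hcut : G.partitionCut W ⊆ s.biUnion fun i => G.cut (U i) := by
    intro e he
    have hsep : ¬∀ i ∈ s, G.fst e ∈ U i ↔ G.snd e ∈ U i := fun h =>
      (mem_filter.1 he).2 _ (W.part_mem.2 (mem_univ (G.fst e)))
        ⟨W.mem_part (mem_univ _), Finpartition.mem_part_ofSetoid_iff_rel.2 h⟩
    simpa using hsep
  calc (#A : ℝ) - 1 ≤ #W.parts - 1 := by gcongr
    _ ≤ ∑ e ∈ G.partitionCut W, x e := hx.2.2 W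
    _ ≤ _ := sum_le_sum_of_subset_of_nonneg hcut fun e _ _ => hx.1 e

omit [DecidableEq E] in
lemma LPFeasible.one_le_sum_cut (hx : G.LPFeasible T x) {U : Finset V} (hU : U.Nonempty)
    (hU' : U ≠ univ) : 1 ≤ ∑ e ∈ G.cut U, x e := by
  obtain ⟨a, ha⟩ := hU
  obtain ⟨b, hb⟩ : ∃ b, b ∉ U := by simpa [eq_univ_iff_forall] using hU'
  have hab : a ≠ b := by rintro rfl; exact hb ha
  have hle := hx.card_sub_one_le_sum_biUnion_cut (s := {()}) (U := fun _ => U) (A := {a, b})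
    (by simp [ha, hb])
  norm_num [card_pair hab] at hle
  exact hle

omit [Fintype V] in
lemma ConnectedOn.cut_eq_of_inter_cut_eq (hS : G.ConnectedOn (· ∈ S)) {U W : Finset V}
    (h : S ∩ G.cut U = S ∩ G.cut W) : G.cut U = G.cut W := by
  refine symmDiff_eq_bot.1 (eq_empty_of_forall_notMem fun e he => ?_)
  obtain ⟨a, ha, b, hb⟩ : ∃ a ∈ U ∆ W, ∃ b, b ∉ U ∆ W := by
    rw [← cut_symmDiff, mem_cut] at he
    by_cases hfst : G.fst e ∈ U ∆ W <;> grind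
  obtain ⟨f, hfcut, hf⟩ := hS.exists_mem_cut ha hb
  have hiff := Finset.ext_iff.1 h f
  rw [cut_symmDiff, mem_symmDiff] at hfcut
  simp only [mem_inter, hf, true_and] at hiff
  tauto

variable (G) in
/-- `C` is a cut of `G` meeting `S` in a single edge; for a spanning tree `S` these are the
fundamental cuts of the edges of `S`. A lonely cut is a narrow fundamental cut. -/
def IsFundamentalCut (S C : Finset E) : Prop :=
  G.IsCut C ∧ #(S ∩ C) = 1

lemma IsFundamentalCut.eq_of_mem (hS : G.ConnectedOn (· ∈ S)) (hC : G.IsFundamentalCut S C)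
    (hC' : G.IsFundamentalCut S C') {e : E} (he : e ∈ S ∩ C) (he' : e ∈ S ∩ C') : C = C' := by
  obtain ⟨⟨U, -, -, rfl⟩, hU⟩ := hC
  obtain ⟨⟨W, -, -, rfl⟩, hW⟩ := hC'
  refine hS.cut_eq_of_inter_cut_eq ?_
  obtain ⟨f, hf⟩ := card_eq_one.1 hU
  obtain ⟨g, hg⟩ := card_eq_one.1 hW
  rw [hf, mem_singleton] at he
  rw [hg, mem_singleton] at he'
  rw [hf, hg, ← he, ← he']

lemma IsFundamentalCut.exists_cut_eq (hC : G.IsFundamentalCut S C) (r : V) :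
    ∃ U : Finset V, C = G.cut U ∧ r ∉ U ∧ ∃ v ∈ U, ∃ u ∉ U, ∃ e, S ∩ C = {e} ∧
      G.oddVerts ({e} : Finset E).val = {v} ∆ {u} := by
  obtain ⟨⟨U, -, -, rfl⟩, hU⟩ := hC
  obtain ⟨W, hW, hr⟩ : ∃ W, G.cut U = G.cut W ∧ r ∉ W := by
    by_cases hr : r ∈ U
    · refine ⟨Uᶜ, ?_, by simpa⟩
      ext e
      simp [not_iff_not]
    · exact ⟨U, rfl, hr⟩
  obtain ⟨e, he⟩ := card_eq_one.1 hU
  have heW : e ∈ G.cut W := hW ▸ mem_of_mem_inter_right (he ▸ mem_singleton_self e)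
  obtain ⟨v, hv, u, hu, hodd⟩ := G.exists_oddVerts_singleton_of_mem_cut heW
  exact ⟨W, hW, hr, v, hv, u, hu, e, he, hodd⟩

/-- If neither cut separated `v` from `v'`, no edge of `S` would leave `U ∪ U'`. -/
lemma ConnectedOn.not_and_of_inter_cut_eq_singleton (hS : G.ConnectedOn (· ∈ S))
    {U U' : Finset V} {r v v' u u' : V} {e e' : E} (hr : r ∉ U) (hr' : r ∉ U')
    (he : S ∩ G.cut U = {e}) (he' : S ∩ G.cut U' = {e'})
    (hodd : G.oddVerts ({e} : Finset E).val = {v} ∆ {u})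
    (hodd' : G.oddVerts ({e'} : Finset E).val = {v'} ∆ {u'})
    (hv : v ∈ U) (hee' : e ≠ e') : ¬(v ∈ U' ∧ v' ∈ U) := by
  rintro ⟨hvU', hv'U⟩
  obtain ⟨f, hfcut, hf⟩ := hS.exists_mem_cut (mem_union_left U' hv)
    (fun h : r ∈ U ∪ U' => (mem_union.1 h).elim hr hr')
  have hfe : f = e ↔ f ∈ G.cut U := by
    simpa [hf] using (Finset.ext_iff.1 he f).symm
  have hfe' : f = e' ↔ f ∈ G.cut U' := by
    simpa [hf] using (Finset.ext_iff.1 he' f).symm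
  have hcases : f ∈ G.cut U ∨ f ∈ G.cut U' := by
    simp only [mem_cut, mem_union] at hfcut ⊢
    tauto
  rcases hcases with h | h
  · obtain rfl := hfe.2 h
    simp only [hee', false_iff, G.mem_cut_iff_of_oddVerts_singleton hodd] at hfe' hfcut
    simp only [mem_union] at hfcut
    tauto
  · obtain rfl := hfe'.2 h
    simp only [hee'.symm, false_iff, G.mem_cut_iff_of_oddVerts_singleton hodd'] at hfe hfcut
    simp only [mem_union] at hfcut
    tauto

/-- The endpoints `v C` of the lonely edges, together with the root `r`, are pairwise separated
by the cuts of the family. -/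
lemma LPFeasible.card_le_sum_biUnion (hx : G.LPFeasible T x) (hS : G.ConnectedOn (· ∈ S))
    {K : Finset (Finset E)} (hK : ∀ C ∈ K, G.IsFundamentalCut S C) :
    (#K : ℝ) ≤ ∑ e ∈ K.biUnion id, x e := by
  rcases K.eq_empty_or_nonempty with rfl | ⟨C₀, hC₀⟩
  · simp
  obtain ⟨⟨-, ⟨r, -⟩, -⟩, -⟩ := hK C₀ hC₀
  have hroot (C : K) := (hK C C.2).exists_cut_eq r
  choose U hU hr v hv u _ e he hodd using hroot
  have hsep (C C' : K) (h : v C ∈ U C' ∧ v C' ∈ U C) : C = C' := by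
    by_contra hne
    refine hS.not_and_of_inter_cut_eq_singleton (hr C) (hr C') (hU C ▸ he C)
      (hU C' ▸ he C') (hodd C) (hodd C') (hv C) (fun hee' => hne (Subtype.ext ?_)) h
    exact (hK C C.2).eq_of_mem hS (hK C' C'.2) (e := e C) (by simp [he]) (by simp [he, hee'])
  have hinj : Function.Injective v := fun C C' h => hsep C C' ⟨h ▸ hv C', h ▸ hv C⟩
  have hle := hx.card_sub_one_le_sum_biUnion_cut (s := univ) (U := U)
    (A := insert r (univ.image v)) ?_
  · have hrv : r ∉ univ.image v := by
      simp only [mem_image, mem_univ, true_and, not_exists]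
      exact fun C h => hr C (h ▸ hv C)
    have hbiUnion : univ.biUnion (fun C : K => G.cut (U C)) = K.biUnion id := by
      ext f
      simp [← hU]
    rw [card_insert_of_notMem hrv, card_image_of_injective _ hinj, hbiUnion, card_univ,
      Fintype.card_coe] at hle
    push_cast at hle
    linarith
  · simp only [mem_insert, mem_image, mem_univ, true_and, forall_const]
    rintro _ (rfl | ⟨C, rfl⟩) _ (rfl | ⟨C', rfl⟩) h
    · rfl
    · exact absurd ((h C').2 (hv C')) (hr C')
    · exact absurd ((h C).1 (hv C)) (hr C)
    · rw [hsep C C' ⟨(h C').2 (hv C'), (h C).1 (hv C)⟩]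

end FundamentalCut

section LonelyCuts

variable {G : MultiGraph V E} {T : Finset V} {x : E → ℝ} {S I C : Finset E}

omit [DecidableEq E] in
@[simp]
lemma mem_narrowCuts : C ∈ G.narrowCuts x ↔ G.Narrow x C := by
  simp [narrowCuts]

@[simp]
lemma mem_lonelyCuts : C ∈ G.lonelyCuts x S ↔ G.Lonely x S C := by
  simp [lonelyCuts]

lemma Lonely.isFundamentalCut (hC : G.Lonely x S C) : G.IsFundamentalCut S C :=
  ⟨hC.1.1, hC.2⟩

omit [DecidableEq E] in
lemma LPFeasible.odd_card_inter_of_lt_two (hx : G.LPFeasible T x) {U : Finset V}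
    (hU : U.Nonempty) (hU' : U ≠ univ) (hlt : ∑ e ∈ G.cut U, x e < 2) : Odd #(T ∩ U) := by
  rw [← Nat.not_even_iff_odd]
  exact fun heven => hlt.not_ge (hx.2.1 U hU hU' heven)

lemma LPFeasible.exists_eq_cut_of_lonely (hx : G.LPFeasible T x) (hC : G.Lonely x S C) :
    ∃ U : Finset V, C = G.cut U ∧ Odd #(T ∩ U) := by
  obtain ⟨⟨⟨U, hU, hU', rfl⟩, hlt⟩, -⟩ := hC
  exact ⟨U, rfl, hx.odd_card_inter_of_lt_two hU hU' hlt⟩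

lemma lonelyEdges_eq_biUnion : G.lonelyEdges x S = (G.lonelyCuts x S).biUnion (S ∩ ·) := by
  ext e
  simp only [lonelyEdges, mem_filter, mem_biUnion, mem_lonelyCuts, mem_inter]
  tauto

lemma lonelyEdges_subset : G.lonelyEdges x S ⊆ S :=
  filter_subset _ _

lemma LPFeasible.lonelyEdges_subset_tJoin (hx : G.LPFeasible T x) (hIS : I ⊆ S)
    (hI : G.oddVerts I.val = T) : G.lonelyEdges x S ⊆ I := by
  intro e he
  obtain ⟨heS, C, hC, heC⟩ := mem_filter.1 he
  obtain ⟨U, rfl, hU⟩ := hx.exists_eq_cut_of_lonely hC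
  obtain ⟨f, hf⟩ := card_eq_one.1 hC.2
  obtain ⟨g, hg⟩ := card_pos.1 ((G.odd_card_oddVerts_inter I U).1 (hI ▸ hU)).pos
  have hgf : g = f := mem_singleton.1 (hf ▸ inter_subset_inter_right hIS hg)
  have hef : e = f := mem_singleton.1 (hf ▸ mem_inter.2 ⟨heS, heC⟩)
  exact hef ▸ hgf ▸ mem_of_mem_inter_left hg

lemma ConnectedOn.sum_lonelyEdges (hS : G.ConnectedOn (· ∈ S)) (f : E → ℝ) :
    ∑ e ∈ G.lonelyEdges x S, f e = ∑ C ∈ G.lonelyCuts x S, ∑ e ∈ S ∩ C, f e := by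
  rw [lonelyEdges_eq_biUnion, sum_biUnion]
  intro C hC C' hC' hne
  have hC := (mem_lonelyCuts.1 hC).isFundamentalCut
  have hC' := (mem_lonelyCuts.1 hC').isFundamentalCut
  exact disjoint_left.2 fun e he he' => hne (hC.eq_of_mem hS hC' he he')

end LonelyCuts

section ModifiedCost

lemma sum_le_sum_biUnion_mul {α ι : Type*} [DecidableEq α] {L : Finset ι} {A : ι → Finset α}
    {x M : α → ℝ} {w : ι → ℝ} (hx : ∀ e, 0 ≤ x e) (hw : ∀ i ∈ L, 0 ≤ w i)
    (hM : ∀ i ∈ L, ∀ e ∈ A i, w i ≤ M e)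
    (hL : ∀ K ⊆ L, (#K : ℝ) ≤ ∑ e ∈ K.biUnion A, x e) :
    ∑ i ∈ L, w i ≤ ∑ e ∈ L.biUnion A, x e * M e := by
  suffices h : ∀ θ : ℝ, (∀ i ∈ L, θ ≤ w i) →
      ∑ i ∈ L, (w i - θ) ≤ ∑ e ∈ L.biUnion A, x e * (M e - θ) by
    simpa using h 0 hw
  clear hw
  induction L using Finset.induction_on_min_value w with
  | empty => simp
  | insert a s ha hmin ih =>
    intro θ hθ
    have hs := ih (fun i hi => hM i (mem_insert_of_mem hi))
      (fun K hK => hL K (hK.trans (subset_insert a s))) (w a) hmin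
    have hextend : ∑ e ∈ s.biUnion A, x e * (M e - w a) ≤
        ∑ e ∈ (insert a s).biUnion A, x e * (M e - w a) := by
      refine sum_le_sum_of_subset_of_nonneg (biUnion_subset_biUnion_of_subset_left A
        (subset_insert a s)) fun e he hes => mul_nonneg (hx e) (sub_nonneg.2 ?_)
      rw [biUnion_insert, mem_union, or_iff_left hes] at he
      exact hM a (mem_insert_self a s) e he
    have hcard := mul_le_mul_of_nonneg_left (hL _ Subset.rfl)
      (sub_nonneg.2 (hθ a (mem_insert_self a s)))
    calc ∑ i ∈ insert a s, (w i - θ)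
        = ∑ i ∈ s, (w i - w a) + (w a - θ) * #(insert a s) := by
          rw [sum_insert ha, card_insert_of_notMem ha]
          simp only [sum_sub_distrib, sum_const, nsmul_eq_mul]
          push_cast
          ring
      _ ≤ ∑ e ∈ (insert a s).biUnion A, x e * (M e - w a) +
          (w a - θ) * ∑ e ∈ (insert a s).biUnion A, x e := add_le_add (hs.trans hextend) hcard
      _ = ∑ e ∈ (insert a s).biUnion A, x e * (M e - θ) := by
          rw [mul_sum, ← sum_add_distrib]
          exact sum_congr rfl fun e _ => by ring

lemma sum_mul_sum_filter_mem {α : Type*} [Fintype α] [DecidableEq α] (x : α → ℝ)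
    (L : Finset (Finset α)) (w : Finset α → ℝ) :
    ∑ e, x e * ∑ C ∈ L with e ∈ C, w C = ∑ C ∈ L, (∑ e ∈ C, x e) * w C := by
  simp only [sum_filter, mul_sum, sum_mul]
  rw [sum_comm]
  simp

variable {G : MultiGraph V E} {T : Finset V} {c x : E → ℝ} {S C : Finset E} {e : E}

variable (G) in
/-- The maximum `max_{C ∈ ℒ_S : e ∈ C} c(S ∩ C)` in the definition of the modified cost, with
value `0` if `e` lies in no lonely cut. -/
noncomputable def maxLonelyCost (c x : E → ℝ) (S : Finset E) (e : E) : ℝ :=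
  if h : ((G.lonelyCuts x S).filter (fun C => e ∈ C)).Nonempty
    then ((G.lonelyCuts x S).filter (fun C => e ∈ C)).sup' h (fun C => ∑ f ∈ S ∩ C, c f)
    else 0

lemma modCost_eq (c x : E → ℝ) (S : Finset E) (e : E) :
    G.modCost c x S e =
      c e + 2 * (∑ C ∈ G.lonelyCuts x S with e ∈ C, ∑ f ∈ S ∩ C, c f - G.maxLonelyCost c x S e) :=
  rfl

lemma sum_le_maxLonelyCost (hC : G.Lonely x S C) (he : e ∈ C) :
    ∑ f ∈ S ∩ C, c f ≤ G.maxLonelyCost c x S e := by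
  have hmem : C ∈ (G.lonelyCuts x S).filter (e ∈ ·) := by simp [hC, he]
  rw [maxLonelyCost, dif_pos ⟨C, hmem⟩]
  exact le_sup' (fun C => ∑ f ∈ S ∩ C, c f) hmem

variable (G) in
lemma exists_modCost_eq_sum_erase (c x : E → ℝ) (S : Finset E) (e : E) :
    ∃ C₀, G.modCost c x S e =
      c e + 2 * ∑ C ∈ ((G.lonelyCuts x S).filter (e ∈ ·)).erase C₀, ∑ f ∈ S ∩ C, c f := by
  by_cases h : ((G.lonelyCuts x S).filter (e ∈ ·)).Nonempty
  · obtain ⟨C₀, hC₀, hmax⟩ := exists_mem_eq_sup' h fun C => ∑ f ∈ S ∩ C, c f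
    refine ⟨C₀, ?_⟩
    rw [modCost_eq, maxLonelyCost, dif_pos h, hmax, sum_erase_eq_sub hC₀]
  · rw [modCost_eq, maxLonelyCost, dif_neg h, not_nonempty_iff_eq_empty.1 h]
    simp

lemma modCost_nonneg (hc : ∀ e, 0 ≤ c e) (e : E) : 0 ≤ G.modCost c x S e := by
  obtain ⟨C₀, h⟩ := G.exists_modCost_eq_sum_erase c x S e
  rw [h]
  exact add_nonneg (hc e) (mul_nonneg two_pos.le (sum_nonneg fun C _ => sum_nonneg fun f _ => hc f))

lemma ConnectedOn.modCost_eq_of_mem (hS : G.ConnectedOn (· ∈ S)) (he : e ∈ S) :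
    G.modCost c x S e = c e := by
  rcases ((G.lonelyCuts x S).filter (e ∈ ·)).eq_empty_or_nonempty with h | ⟨C, hC⟩
  · simp [modCost, h]
  · have h : (G.lonelyCuts x S).filter (e ∈ ·) = {C} := by
      simp only [mem_filter, mem_lonelyCuts] at hC
      ext C'
      simp only [mem_filter, mem_lonelyCuts, mem_singleton]
      exact ⟨fun hC' => hC'.1.isFundamentalCut.eq_of_mem hS hC.1.isFundamentalCut
        (mem_inter.2 ⟨he, hC'.2⟩) (mem_inter.2 ⟨he, hC.2⟩), fun h => h ▸ hC⟩
    simp [modCost, h]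

lemma LPFeasible.sum_lonelyCuts_le_sum_mul_maxLonelyCost (hx : G.LPFeasible T x)
    (hS : G.ConnectedOn (· ∈ S)) (hc : ∀ e, 0 ≤ c e) :
    ∑ C ∈ G.lonelyCuts x S, ∑ e ∈ S ∩ C, c e ≤ ∑ e, x e * G.maxLonelyCost c x S e := by
  refine (sum_le_sum_biUnion_mul (A := id) hx.1 (fun C _ => sum_nonneg fun e _ => hc e)
    (fun C hC e he => sum_le_maxLonelyCost (mem_lonelyCuts.1 hC) he) fun K hK =>
    hx.card_le_sum_biUnion hS fun C hC => (mem_lonelyCuts.1 (hK hC)).isFundamentalCut).trans_eq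
    (sum_subset (subset_univ _) fun e _ he => ?_)
  have hempty : (G.lonelyCuts x S).filter (e ∈ ·) = ∅ := by
    simpa [filter_eq_empty_iff] using he
  simp [maxLonelyCost, hempty]

lemma LPFeasible.sum_mul_modCost_le (hx : G.LPFeasible T x) (hS : G.ConnectedOn (· ∈ S))
    (hc : ∀ e, 0 ≤ c e) :
    ∑ e, x e * G.modCost c x S e ≤ ∑ e, c e * x e +
      2 * ∑ C ∈ G.lonelyCuts x S, (∑ e ∈ C, x e - 1) * ∑ e ∈ S ∩ C, c e := by
  calc ∑ e, x e * G.modCost c x S e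
      = ∑ e, c e * x e + 2 * (∑ e, x e * ∑ C ∈ G.lonelyCuts x S with e ∈ C, ∑ f ∈ S ∩ C, c f -
          ∑ e, x e * G.maxLonelyCost c x S e) := by
        rw [← sum_sub_distrib, mul_sum, ← sum_add_distrib]
        exact sum_congr rfl fun e _ => by rw [modCost_eq]; ring
    _ ≤ _ := by
        simp only [sub_one_mul, sum_sub_distrib, sum_mul_sum_filter_mem]
        linarith [hx.sum_lonelyCuts_le_sum_mul_maxLonelyCost hS hc]

end ModifiedCost

section Tour

variable {G : MultiGraph V E} {T : Finset V} {x : E → ℝ} {S J : Finset E} {D : Multiset E}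

variable (G) in
/-- `D` repairs the tree `S`, stripped of its lonely edges and augmented by the join `J`: each
`e ∈ J` replaces the lonely edge of one of the lonely cuts it crosses, and `D` contains the lonely
edges of all the others. -/
def IsRepair (x : E → ℝ) (S J : Finset E) (D : Multiset E) : Prop :=
  ∀ e ∈ J, ∃ C₀, ∀ C, G.Lonely x S C → e ∈ C → C ≠ C₀ → ∀ f ∈ S ∩ C, f ∈ D

variable (G) in
lemma exists_isRepair_two_mul_sum_eq (c x : E → ℝ) (S J : Finset E) :
    ∃ D, G.IsRepair x S J D ∧ 2 * (D.map c).sum = ∑ e ∈ J, (G.modCost c x S e - c e) := by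
  choose C₀ hC₀ using G.exists_modCost_eq_sum_erase c x S
  refine ⟨∑ e ∈ J, ∑ C ∈ ((G.lonelyCuts x S).filter (e ∈ ·)).erase (C₀ e), (S ∩ C).val,
    fun e he => ⟨C₀ e, fun C hC heC hne f hf => ?_⟩, ?_⟩
  · exact Multiset.mem_sum.2 ⟨e, he, Multiset.mem_sum.2 ⟨C, by simp [hne, hC, heC], hf⟩⟩
  · simp only [hC₀, add_sub_cancel_left, ← mul_sum, ← Multiset.coe_mapAddMonoidHom,
      ← Multiset.coe_sumAddMonoidHom, map_sum]
    rfl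

omit [Fintype V] in
lemma ConnectedOn.exists_subset_odd_card_inter_cut_iff [Finite V]
    (hS : G.ConnectedOn (· ∈ S)) (e : E) :
    ∃ P ⊆ S, ∀ U, Odd #(P ∩ G.cut U) ↔ e ∈ G.cut U := by
  have := Fintype.ofFinite V
  obtain ⟨P, hPS, hP⟩ := G.exists_oddVerts_of_reflTransGen (hS (G.fst e) (G.snd e))
  exact ⟨P, hPS, fun U => by rw [G.odd_card_inter_cut_of_oddVerts hP, mem_cut]⟩

/-- Of the edges of `S` crossing `W`, the path of `S` joining the ends of `e` uses only `f`. -/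
lemma ConnectedOn.mem_cut_of_forall_isFundamentalCut (hS : G.ConnectedOn (· ∈ S)) {e f : E}
    {W : Finset V} (hf : f ∈ S ∩ G.cut W)
    (hcuts : ∀ h ∈ S ∩ G.cut W, ∃ C, G.IsFundamentalCut S C ∧ h ∈ C ∧ (e ∈ C ↔ h = f)) :
    e ∈ G.cut W := by
  obtain ⟨P, hPS, hP⟩ := hS.exists_subset_odd_card_inter_cut_iff e
  have hpath : ∀ h ∈ S ∩ G.cut W, h ∈ P ↔ h = f := by
    intro h hh
    obtain ⟨C, ⟨⟨U, -, -, rfl⟩, hC⟩, hhC, hiff⟩ := hcuts h hh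
    obtain ⟨g, hg⟩ := card_eq_one.1 hC
    obtain rfl : h = g :=
      mem_singleton.1 (hg ▸ mem_inter.2 ⟨mem_of_mem_inter_left hh, hhC⟩)
    rw [← hiff, ← hP, ← inter_eq_left.2 hPS, inter_assoc, hg, odd_card_inter_singleton,
      inter_eq_left.2 hPS]
  rw [← hP]
  have hPW : P ∩ G.cut W = {f} := by
    ext h
    rw [mem_inter, mem_singleton]
    refine ⟨fun hh => (hpath h (mem_inter.2 ⟨hPS hh.1, hh.2⟩)).1 hh.1, ?_⟩
    rintro rfl
    exact ⟨(hpath h hf).2 rfl, mem_of_mem_inter_right hf⟩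
  simp [hPW]

lemma ConnectedOn.connectedOn_of_repair (hS : G.ConnectedOn (· ∈ S))
    (hJ : ∀ C, G.Lonely x S C → (J ∩ C).Nonempty)
    (hD : G.IsRepair x S J D) :
    G.ConnectedOn fun e => e ∈ S \ G.lonelyEdges x S ∨ e ∈ J ∨ e ∈ D := by
  refine G.connectedOn_of_forall_cut fun W ⟨a, ha⟩ hW => ?_
  obtain ⟨b, hb⟩ : ∃ b, b ∉ W := by simpa [eq_univ_iff_forall] using hW
  by_contra! hmiss
  have hlonely {h : E} (hh : h ∈ S ∩ G.cut W) : ∃ C, G.Lonely x S C ∧ h ∈ C := by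
    obtain ⟨hhS, hhW⟩ := mem_inter.1 hh
    have hhL : h ∈ G.lonelyEdges x S := by simpa [hhS] using (hmiss h hhW).1
    exact (mem_filter.1 hhL).2
  obtain ⟨f, hfW, hfS⟩ := hS.exists_mem_cut ha hb
  obtain ⟨C, hC, hfC⟩ := hlonely (mem_inter.2 ⟨hfS, hfW⟩)
  obtain ⟨e, he⟩ := hJ C hC
  obtain ⟨heJ, heC⟩ := mem_inter.1 he
  obtain ⟨C₀, hC₀⟩ := hD e heJ
  have hunique {C' : Finset E} {h : E} (hC' : G.Lonely x S C') (heC' : e ∈ C') (hh : h ∈ S ∩ C')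
      (hhW : h ∈ G.cut W) : C' = C₀ :=
    by_contra fun hne => (hmiss h hhW).2.2 (hC₀ C' hC' heC' hne h hh)
  refine (hmiss e (hS.mem_cut_of_forall_isFundamentalCut (mem_inter.2 ⟨hfS, hfW⟩)
    fun h hh => ?_)).2.1 heJ
  obtain ⟨hhS, hhW⟩ := mem_inter.1 hh
  obtain ⟨C', hC', hhC'⟩ := hlonely hh
  refine ⟨C', hC'.isFundamentalCut, hhC', fun heC' => ?_, ?_⟩
  · obtain rfl : C = C' := (hunique hC heC (mem_inter.2 ⟨hfS, hfC⟩) hfW).trans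
      (hunique hC' heC' (mem_inter.2 ⟨hhS, hhC'⟩) hhW).symm
    exact card_le_one.1 hC.2.le h (mem_inter.2 ⟨hhS, hhC'⟩) f (mem_inter.2 ⟨hfS, hfC⟩)
  · rintro rfl
    exact hC.isFundamentalCut.eq_of_mem hS hC'.isFundamentalCut (mem_inter.2 ⟨hhS, hfC⟩)
      (mem_inter.2 ⟨hhS, hhC'⟩) ▸ heC

lemma LPFeasible.inter_nonempty_of_lonely (hx : G.LPFeasible T x) {C : Finset E}
    (hC : G.Lonely x S C)
    (hJ : G.oddVerts J.val = T ∆ G.oddVerts (S \ G.lonelyEdges x S).val) : (J ∩ C).Nonempty := by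
  obtain ⟨U, rfl, hU⟩ := hx.exists_eq_cut_of_lonely hC
  have hempty : (S \ G.lonelyEdges x S) ∩ G.cut U = ∅ := by
    refine eq_empty_of_forall_notMem fun e he => ?_
    obtain ⟨⟨heS, heL⟩, heU⟩ := (mem_inter.trans (and_congr_left' mem_sdiff)).1 he
    exact heL (mem_filter.2 ⟨heS, _, hC, heU⟩)
  have hodd : Odd #(J ∩ G.cut U) := by
    rw [← odd_card_oddVerts_inter, hJ, odd_card_symmDiff_inter, ← Nat.not_odd_iff_even,
      odd_card_oddVerts_inter, hempty]
    simpa using hU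
  exact card_pos.1 hodd.pos

lemma LPFeasible.isTTour_of_repair (hx : G.LPFeasible T x) (hS : G.ConnectedOn (· ∈ S))
    (hJ : G.oddVerts J.val = T ∆ G.oddVerts (S \ G.lonelyEdges x S).val)
    (hD : G.IsRepair x S J D) :
    G.IsTTour T ((S \ G.lonelyEdges x S).val + J.val + (D + D)) := by
  refine ⟨?_, ?_⟩
  · convert hS.connectedOn_of_repair (fun C hC => hx.inter_nonempty_of_lonely hC hJ) hD using 2
    simp only [Multiset.mem_add, mem_val, or_self, or_assoc]
  · rw [oddVerts_add, oddVerts_add, oddVerts_add, hJ, symmDiff_self, symmDiff_bot, symmDiff_comm T,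
      symmDiff_symmDiff_cancel_left]

end Tour

section CorrectionVector

variable {G : MultiGraph V E} {T : Finset V} {x : E → ℝ} {S I C : Finset E}

variable (G) in
/-- The vector `2/5 x + 1/5 χ^{S \ L_S} + 1/5 χ^{I \ L_S} + Σ_{C ∈ ℒ_S} (1 - 2/5 x(C)) χ^{S ∩ C}`,
which dominates a join correcting the parities of `S \ L_S`. -/
noncomputable def correction (x : E → ℝ) (S I : Finset E) (e : E) : ℝ :=
  2 / 5 * x e + 1 / 5 * chi (S \ G.lonelyEdges x S) e + 1 / 5 * chi (I \ G.lonelyEdges x S) e +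
    ∑ C ∈ G.lonelyCuts x S, (1 - 2 / 5 * ∑ f ∈ C, x f) * chi (S ∩ C) e

lemma sum_correction (A : Finset E) :
    ∑ e ∈ A, G.correction x S I e = 2 / 5 * ∑ e ∈ A, x e + 1 / 5 * #(A ∩ (S \ G.lonelyEdges x S)) +
      1 / 5 * #(A ∩ (I \ G.lonelyEdges x S)) +
      ∑ C ∈ G.lonelyCuts x S, (1 - 2 / 5 * ∑ f ∈ C, x f) * #(A ∩ (S ∩ C)) := by
  simp only [correction, sum_add_distrib, ← mul_sum, sum_chi]
  rw [sum_comm]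
  simp only [← mul_sum, sum_chi]

lemma one_fifth_le_one_sub_of_lonely (hC : G.Lonely x S C) :
    1 / 5 ≤ 1 - 2 / 5 * ∑ f ∈ C, x f := by
  linarith [hC.1.2]

lemma correction_nonneg (hx : ∀ e, 0 ≤ x e) (e : E) : 0 ≤ G.correction x S I e := by
  have hchi (A : Finset E) : 0 ≤ chi A e := by
    unfold chi
    positivity
  have hsum : 0 ≤ ∑ C ∈ G.lonelyCuts x S, (1 - 2 / 5 * ∑ f ∈ C, x f) * chi (S ∩ C) e :=
    sum_nonneg fun C hC => mul_nonneg
      (by linarith [one_fifth_le_one_sub_of_lonely (mem_lonelyCuts.1 hC)]) (hchi _)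
  unfold correction
  linarith [hx e, hchi (S \ G.lonelyEdges x S), hchi (I \ G.lonelyEdges x S)]

lemma le_sum_correction (A : Finset E) :
    2 / 5 * ∑ e ∈ A, x e + 1 / 5 * (#(A ∩ (S \ G.lonelyEdges x S)) +
      #(A ∩ (I \ G.lonelyEdges x S)) + #(A ∩ G.lonelyEdges x S) : ℕ) ≤
      ∑ e ∈ A, G.correction x S I e := by
  have hL : (#(A ∩ G.lonelyEdges x S) : ℝ) ≤ ∑ C ∈ G.lonelyCuts x S, (#(A ∩ (S ∩ C)) : ℝ) := by
    rw [lonelyEdges_eq_biUnion, inter_biUnion]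
    exact_mod_cast card_biUnion_le
  have hsum : 1 / 5 * ∑ C ∈ G.lonelyCuts x S, (#(A ∩ (S ∩ C)) : ℝ) ≤
      ∑ C ∈ G.lonelyCuts x S, (1 - 2 / 5 * ∑ f ∈ C, x f) * #(A ∩ (S ∩ C)) := by
    rw [mul_sum]
    exact sum_le_sum fun C hC => mul_le_mul_of_nonneg_right
      (one_fifth_le_one_sub_of_lonely (mem_lonelyCuts.1 hC)) (Nat.cast_nonneg _)
  rw [sum_correction]
  push_cast
  linarith

lemma one_le_sum_correction_of_lonely (hC : G.Lonely x S C) :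
    1 ≤ ∑ e ∈ C, G.correction x S I e := by
  have hterm := single_le_sum (f := fun C' => (1 - 2 / 5 * ∑ f ∈ C', x f) * (#(C ∩ (S ∩ C')) : ℝ))
    (fun C' hC' => mul_nonneg (by linarith [one_fifth_le_one_sub_of_lonely (mem_lonelyCuts.1 hC')])
      (Nat.cast_nonneg _)) (mem_lonelyCuts.2 hC)
  have hcard : #(C ∩ (S ∩ C)) = 1 := by
    rw [inter_eq_right.2 inter_subset_right, hC.2]
  rw [hcard, Nat.cast_one, mul_one] at hterm
  rw [sum_correction]
  have := Nat.cast_nonneg (α := ℝ) #(C ∩ (S \ G.lonelyEdges x S))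
  have := Nat.cast_nonneg (α := ℝ) #(C ∩ (I \ G.lonelyEdges x S))
  linarith

lemma LPFeasible.one_le_sum_cut_correction (hx : G.LPFeasible T x) (hIS : I ⊆ S)
    (hI : G.oddVerts I.val = T) {U : Finset V}
    (hU : Odd #((T ∆ G.oddVerts (S \ G.lonelyEdges x S).val) ∩ U)) :
    1 ≤ ∑ e ∈ G.cut U, G.correction x S I e := by
  have hle := le_sum_correction (G := G) (x := x) (S := S) (I := I) (G.cut U)
  set L := G.lonelyEdges x S
  have hcard {A : Finset E} (hA : L ⊆ A) :
      #(A ∩ G.cut U) = #(G.cut U ∩ (A \ L)) + #(G.cut U ∩ L) := by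
    rw [← card_union_of_disjoint (disjoint_sdiff_self_left.mono inter_subset_right
      inter_subset_right), ← inter_union_distrib_left, sdiff_union_of_subset hA, inter_comm]
  have hcardS := hcard lonelyEdges_subset
  have hcardI := hcard (hx.lonelyEdges_subset_tJoin hIS hI)
  have hcardIS : #(I ∩ G.cut U) ≤ #(S ∩ G.cut U) := card_le_card (inter_subset_inter_right hIS)
  have hTU : Odd #(T ∩ U) ↔ Odd #(I ∩ G.cut U) := by rw [← hI, odd_card_oddVerts_inter]
  have hparity : Odd #(I ∩ G.cut U) ↔ Even #(G.cut U ∩ (S \ L)) := by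
    rw [← hTU, (odd_card_symmDiff_inter ..).1 hU, ← Nat.not_odd_iff_even, odd_card_oddVerts_inter,
      inter_comm, Nat.not_odd_iff_even]
  have hne : U.Nonempty := nonempty_iff_ne_empty.2 fun h => by simp [h] at hU
  have hne' : U ≠ univ := fun h => by simp [h] at hparity
  rcases le_or_gt 2 (∑ e ∈ G.cut U, x e) with hge | hlt
  · have hpos : 1 ≤ #(G.cut U ∩ (S \ L)) + #(G.cut U ∩ (I \ L)) + #(G.cut U ∩ L) := by
      grind
    have : (1 : ℝ) ≤ _ := Nat.one_le_cast.2 hpos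
    linarith
  by_cases hlonely : #(S ∩ G.cut U) = 1
  · exact one_le_sum_correction_of_lonely ⟨⟨⟨U, hne, hne', rfl⟩, hlt⟩, hlonely⟩
  · have hodd := hTU.1 (hx.odd_card_inter_of_lt_two hne hne' hlt)
    have hthree : 3 ≤ #(G.cut U ∩ (S \ L)) + #(G.cut U ∩ (I \ L)) + #(G.cut U ∩ L) := by
      grind
    have : (3 : ℝ) ≤ _ := Nat.ofNat_le_cast.2 hthree
    linarith [hx.one_le_sum_cut hne hne']

end CorrectionVector

section Bound

variable {G : MultiGraph V E} {T : Finset V} {c x : E → ℝ} {S I : Finset E}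

lemma LPFeasible.sum_correction_mul_modCost_le (hx : G.LPFeasible T x)
    (hS : G.ConnectedOn (· ∈ S)) (hIS : I ⊆ S) (hI : G.oddVerts I.val = T) (hc : ∀ e, 0 ≤ c e) :
    ∑ e, G.correction x S I e * G.modCost c x S e ≤
      2 / 5 * ∑ e, c e * x e + 1 / 5 * ∑ e ∈ S, c e + 1 / 5 * ∑ e ∈ I, c e -
        2 / 5 * ∑ e ∈ G.lonelyEdges x S, c e +
        ∑ C ∈ G.lonelyCuts x S, (1 / 5 + 2 / 5 * ∑ e ∈ C, x e) * ∑ e ∈ S ∩ C, c e := by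
  have hmod {A : Finset E} (hA : A ⊆ S) : ∑ e, chi A e * G.modCost c x S e = ∑ e ∈ A, c e := by
    simp only [mul_comm (chi A _), sum_mul_chi]
    exact sum_congr rfl fun e he => hS.modCost_eq_of_mem (hA he)
  have hcuts : ∑ e, (∑ C ∈ G.lonelyCuts x S, (1 - 2 / 5 * ∑ f ∈ C, x f) * chi (S ∩ C) e) *
      G.modCost c x S e =
      ∑ C ∈ G.lonelyCuts x S, (1 - 2 / 5 * ∑ e ∈ C, x e) * ∑ e ∈ S ∩ C, c e := by
    simp only [sum_mul, mul_assoc]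
    rw [sum_comm]
    simp only [← mul_sum, hmod inter_subset_left]
  have hsdiffS := sum_sdiff (f := c) (G.lonelyEdges_subset (x := x) (S := S))
  have hsdiffI := sum_sdiff (f := c) (hx.lonelyEdges_subset_tJoin hIS hI)
  have hcombine : ∑ C ∈ G.lonelyCuts x S, (1 / 5 + 2 / 5 * ∑ e ∈ C, x e) * ∑ e ∈ S ∩ C, c e =
      4 / 5 * ∑ C ∈ G.lonelyCuts x S, (∑ e ∈ C, x e - 1) * ∑ e ∈ S ∩ C, c e +
        ∑ C ∈ G.lonelyCuts x S, (1 - 2 / 5 * ∑ e ∈ C, x e) * ∑ e ∈ S ∩ C, c e := by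
    rw [mul_sum, ← sum_add_distrib]
    exact sum_congr rfl fun C _ => by ring
  have hsum : ∑ e, G.correction x S I e * G.modCost c x S e =
      2 / 5 * ∑ e, x e * G.modCost c x S e + 1 / 5 * ∑ e ∈ S \ G.lonelyEdges x S, c e +
        1 / 5 * ∑ e ∈ I \ G.lonelyEdges x S, c e +
        ∑ C ∈ G.lonelyCuts x S, (1 - 2 / 5 * ∑ e ∈ C, x e) * ∑ e ∈ S ∩ C, c e := by
    simp only [correction, add_mul, sum_add_distrib, mul_assoc, ← mul_sum, hcuts,
      hmod sdiff_subset, hmod (sdiff_subset.trans hIS)]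
  rw [hsum, hcombine]
  linarith [hx.sum_mul_modCost_le hS hc]

theorem LPFeasible.exists_isTTour (hx : G.LPFeasible T x) (hS : G.ConnectedOn (· ∈ S))
    (hIS : I ⊆ S) (hI : G.oddVerts I.val = T) (hc : ∀ e, 0 ≤ c e) :
    ∃ F, G.IsTTour T F ∧ (F.map c).sum ≤
      6 / 5 * ∑ e ∈ S, c e + 1 / 5 * ∑ e ∈ I, c e + 2 / 5 * ∑ e, c e * x e -
        2 / 5 * ∑ e ∈ G.lonelyEdges x S, c e -
        2 / 5 * ∑ C ∈ G.lonelyCuts x S, (2 - ∑ e ∈ C, x e) * ∑ e ∈ S ∩ C, c e := by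
  set L := G.lonelyEdges x S
  obtain ⟨J, hJ, hJcost⟩ := exists_tJoin_sum_le_sum_mul (w := G.modCost c x S)
    (modCost_nonneg hc) (hI ▸ G.oddVerts_symmDiff I (S \ L)) (correction_nonneg hx.1)
    (fun U hU => hx.one_le_sum_cut_correction hIS hI hU)
  obtain ⟨D, hD, hDcost⟩ := G.exists_isRepair_two_mul_sum_eq c x S J
  refine ⟨_, hx.isTTour_of_repair hS hJ hD, ?_⟩
  have hcost : (((S \ L).val + J.val + (D + D)).map c).sum =
      ∑ e ∈ S \ L, c e + ∑ e ∈ J, G.modCost c x S e := by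
    simp only [Multiset.map_add, Multiset.sum_add, ← two_mul, hDcost, sum_sub_distrib]
    simp only [sum_eq_multiset_sum]
    ring
  have hsdiff : ∑ e ∈ S \ L, c e + ∑ e ∈ L, c e = ∑ e ∈ S, c e := sum_sdiff lonelyEdges_subset
  have hcombine : 2 / 5 * ∑ C ∈ G.lonelyCuts x S, (2 - ∑ e ∈ C, x e) * ∑ e ∈ S ∩ C, c e =
      ∑ e ∈ L, c e -
        ∑ C ∈ G.lonelyCuts x S, (1 / 5 + 2 / 5 * ∑ e ∈ C, x e) * ∑ e ∈ S ∩ C, c e := by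
    rw [hS.sum_lonelyEdges, mul_sum, ← sum_sub_distrib]
    exact sum_congr rfl fun C _ => by ring
  linarith [hx.sum_correction_mul_modCost_le hS hIS hI hc]

end Bound

section Averaging

lemma exists_ne_zero_le_sum_mul {ι : Type*} [Fintype ι] {p : ι → ℝ} (hp : ∀ i, 0 ≤ p i)
    (hsum : ∑ i, p i = 1) (b : ι → ℝ) : ∃ i, p i ≠ 0 ∧ b i ≤ ∑ j, p j * b j := by
  by_contra! hlt
  have hle (i : ι) : p i * ∑ j, p j * b j ≤ p i * b i := by
    by_cases hi : p i = 0
    · simp [hi]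
    · exact mul_le_mul_of_nonneg_left (hlt i hi).le (hp i)
  obtain ⟨i, -, hi⟩ := exists_ne_zero_of_sum_ne_zero (hsum ▸ one_ne_zero)
  have hsum_lt := sum_lt_sum (fun i _ => hle i)
    ⟨i, mem_univ i, mul_lt_mul_of_pos_left (hlt i hi) ((hp i).lt_of_ne' hi)⟩
  simp [← sum_mul, hsum] at hsum_lt

lemma sum_mul_sum_mul_chi {α ι : Type*} [Fintype α] [DecidableEq α] [Fintype ι] (c : α → ℝ)
    (p : ι → ℝ) (A : ι → Finset α) :
    ∑ e, c e * ∑ i, p i * chi (A i) e = ∑ i, p i * ∑ e ∈ A i, c e := by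
  simp only [mul_sum, mul_left_comm (c _)]
  rw [sum_comm]
  simp only [← mul_sum, sum_mul_chi]

variable {G : MultiGraph V E} {x : E → ℝ}

lemma Narrow.sq_mul_sum_mul_vC {C : Finset E} (hC : G.Narrow x C) (c : E → ℝ)
    (p : Finset E → ℝ) :
    (2 - ∑ f ∈ C, x f) ^ 2 * ∑ e, c e * G.vC x p C e =
      ∑ S, p S * if G.Lonely x S C then (2 - ∑ f ∈ C, x f) * ∑ e ∈ S ∩ C, c e else 0 := by
  have hne : 2 - ∑ f ∈ C, x f ≠ 0 := (sub_pos.2 hC.2).ne'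
  simp only [vC, mul_left_comm (c _), ← mul_sum, sum_mul_sum_mul_chi]
  rw [← mul_assoc, show (2 - ∑ f ∈ C, x f) ^ 2 * (1 / (2 - ∑ f ∈ C, x f)) = 2 - ∑ f ∈ C, x f by
    field_simp, mul_sum]
  refine sum_congr rfl fun S _ => ?_
  split_ifs <;> ring

lemma sum_narrowCuts_sq_mul_vC (G : MultiGraph V E) (c x : E → ℝ) (p : Finset E → ℝ) :
    ∑ C ∈ G.narrowCuts x, (2 - ∑ f ∈ C, x f) ^ 2 * ∑ e, c e * G.vC x p C e =
      ∑ S, p S * ∑ C ∈ G.lonelyCuts x S, (2 - ∑ f ∈ C, x f) * ∑ e ∈ S ∩ C, c e := by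
  rw [sum_congr rfl fun C hC => (mem_narrowCuts.1 hC).sq_mul_sum_mul_vC c p, sum_comm]
  refine sum_congr rfl fun S _ => ?_
  have hlonely : G.lonelyCuts x S = (G.narrowCuts x).filter (G.Lonely x S) := by
    ext C
    simpa using fun h => h.1
  rw [← mul_sum, hlonely, sum_filter]

end Averaging

theorem edge_deletion_bound_general (G : MultiGraph V E)
    (T : Finset V) (c : E → ℝ) (hc : ∀ e, 0 ≤ c e)
    (x : E → ℝ) (hx : G.LPFeasible T x)
    (p : Finset E → ℝ) (hp0 : ∀ S, 0 ≤ p S)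
    (hpconn : ∀ S, p S ≠ 0 → G.ConnectedOn (· ∈ S))
    (hpsum : ∑ S : Finset E, p S = 1)
    (hdom : ∀ e, ∑ S : Finset E, p S * chi S e ≤ x e)
    (I : Finset E → Finset E)
    (hI : ∀ S, p S ≠ 0 → I S ⊆ S ∧ G.oddVerts (I S).val = T) :
    ∃ F : Multiset E, G.IsTTour T F ∧
      (F.map c).sum ≤
        (8 / 5 : ℝ) * (∑ e, c e * x e) +
        (1 / 5 : ℝ) * (∑ e, c e * ∑ S : Finset E, p S * chi (I S) e) -
        (2 / 5 : ℝ) * (∑ e, c e * ∑ S : Finset E, p S * chi (G.lonelyEdges x S) e) -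
        (2 / 5 : ℝ) * ∑ C ∈ G.narrowCuts x,
          (2 - ∑ f ∈ C, x f) ^ 2 * (∑ e, c e * G.vC x p C e) := by
  obtain ⟨S, hpS, hle⟩ := exists_ne_zero_le_sum_mul hp0 hpsum fun S =>
    6 / 5 * ∑ e ∈ S, c e + 1 / 5 * ∑ e ∈ I S, c e + 2 / 5 * ∑ e, c e * x e -
      2 / 5 * ∑ e ∈ G.lonelyEdges x S, c e -
      2 / 5 * ∑ C ∈ G.lonelyCuts x S, (2 - ∑ e ∈ C, x e) * ∑ e ∈ S ∩ C, c e
  obtain ⟨F, hF, hcost⟩ := hx.exists_isTTour (hpconn S hpS) (hI S hpS).1 (hI S hpS).2 hc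
  have htrees : ∑ S, p S * ∑ e ∈ S, c e ≤ ∑ e, c e * x e := by
    rw [← sum_mul_sum_mul_chi]
    exact sum_le_sum fun e _ => mul_le_mul_of_nonneg_left (hdom e) (hc e)
  simp only [mul_add, mul_sub, mul_left_comm (p _), sum_add_distrib, sum_sub_distrib, ← mul_sum,
    ← sum_mul, hpsum, one_mul] at hle
  refine ⟨F, hF, ?_⟩
  rw [sum_narrowCuts_sq_mul_vC, sum_mul_sum_mul_chi, sum_mul_sum_mul_chi]
  linarith

/-- There is a `T`-tour of cost at most
`(8/5)c(x*) + (1/5)c(I_p) − (2/5)c(L_p) − (2/5)Σ_{C ∈ 𝒩} (2 − x*(C))²·c(v^C)`. -/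
theorem edge_deletion_bound (G : MultiGraph V E) (hG : G.Connected)
    (T : Finset V) (hT : Even T.card) (c : E → ℝ) (hc : ∀ e, 0 ≤ c e)
    (x : E → ℝ) (hx : G.LPFeasible T x)
    (p : Finset E → ℝ) (hp0 : ∀ S, 0 ≤ p S)
    (hptree : ∀ S, p S ≠ 0 → G.IsSpanningTree S)
    (hpsum : ∑ S : Finset E, p S = 1)
    (hdom : ∀ e, ∑ S : Finset E, p S * chi S e ≤ x e)
    (I : Finset E → Finset E)
    (hI : ∀ S, p S ≠ 0 → I S ⊆ S ∧ G.oddVerts (I S).val = T) :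
    ∃ F : Multiset E, G.IsTTour T F ∧
      (F.map c).sum ≤
        (8 / 5 : ℝ) * (∑ e, c e * x e) +
        (1 / 5 : ℝ) * (∑ e, c e * ∑ S : Finset E, p S * chi (I S) e) -
        (2 / 5 : ℝ) * (∑ e, c e * ∑ S : Finset E, p S * chi (G.lonelyEdges x S) e) -
        (2 / 5 : ℝ) * ∑ C ∈ G.narrowCuts x,
          (2 - ∑ f ∈ C, x f) ^ 2 * (∑ e, c e * G.vC x p C e) :=
  edge_deletion_bound_general G T c hc x hx p hp0 (fun S hS => (hptree S hS).1) hpsum hdom I hI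

end MultiGraph
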